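/- Let K' ⊂ ℝ^n be a bounded nonempty set, let L ⊆ ℝ^n be a linear subspace of dimension L, and let P : ℝ^n → ℝ^L be the matrix of an orthogonal projection onto L expressed in an orthonormal basis of L (so that PᵀP is the orthogonal projection onto L and P Pᵀ = I_L). Then the Gaussian mean width satisfies w(P(K')) ≤ 2 w(K'), where w(S) = E sup_{u ∈ S} ⟨g, u⟩ for g a standard Gaussian vector of the appropriate dimension. -/

import Mathlib

open MeasureTheory ProbabilityTheory

/-- Gaussian mean width of a subset of `Fin d → ℝ`. -/
noncomputable def gaussianMeanWidth {d : ℕ} (S : Set (Fin d → ℝ)) : ℝ :=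
  ∫ g, sSup ((fun u => ∑ i, g i * u i) '' S) ∂(Measure.pi fun _ : Fin d => gaussianReal 0 1)

/-!
Let `h` be the support function of `K'`, a convex function. Since `⟨g, P u⟩ = ⟨Pᵀ g, u⟩`, and
`Pᵀ g` has law `N(0, Pᵀ P)` for a standard Gaussian `g`, the mean width of `P K'` is the integral
of `h` against `N(0, Pᵀ P)`. For `0 ≤ S ≤ T` in the Loewner order,
`N(0, T) = N(0, S) ∗ N(0, T - S)`, so by Jensen's inequality the Gaussian integral of a convex
function is monotone in the covariance. Comparing `N(0, Pᵀ P)` with `N(0, 1)` bounds the mean width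
of `P K'` by that of `K'`, and comparing `N(0, 0)`, the Dirac mass at `0`, with `N(0, 1)` shows that
the mean width of `K'` is nonnegative.
-/

open Matrix Set WithLp
open scoped MatrixOrder RealInnerProductSpace

section ConvexOrder

variable {E : Type*} [NormedAddCommGroup E] [NormedSpace ℝ E] [CompleteSpace E]
  [MeasurableSpace E] [MeasurableAdd₂ E]

theorem integral_le_integral_conv_of_convexOn {μ ν : Measure E} [SFinite μ]
    [IsProbabilityMeasure ν] {f : E → ℝ} (hf : ConvexOn ℝ univ f) (hcont : Continuous f)
    (hν : Integrable id ν) (hν₀ : ∫ z, z ∂ν = 0) (hfμ : Integrable f μ)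
    (hfμν : Integrable f (μ ∗ ν)) :
    ∫ x, f x ∂μ ≤ ∫ x, f x ∂(μ ∗ ν) := by
  have hprod : Integrable (fun p : E × E ↦ f (p.1 + p.2)) (μ.prod ν) :=
    hfμν.comp_measurable (by fun_prop)
  rw [integral_conv hfμν]
  refine integral_mono_ae hfμ hprod.integral_prod_left ?_
  filter_upwards [hprod.prod_right_ae] with x hx
  have hmean : ∫ z, x + z ∂ν = x := by
    simpa [hν₀] using integral_add (integrable_const x) hν
  calc f x = f (∫ z, x + z ∂ν) := by rw [hmean]
    _ ≤ ∫ z, f (x + z) ∂ν :=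
      hf.map_integral_le hcont.continuousOn isClosed_univ (by simp)
        ((integrable_const x).add hν) hx

end ConvexOrder

theorem charFun_map_linearMap {E F : Type*} [NormedAddCommGroup E] [InnerProductSpace ℝ E]
    [FiniteDimensional ℝ E] [MeasurableSpace E] [BorelSpace E] [NormedAddCommGroup F]
    [InnerProductSpace ℝ F] [FiniteDimensional ℝ F] [MeasurableSpace F] [BorelSpace F]
    (μ : Measure E) (T : E →ₗ[ℝ] F) (t : F) :
    charFun (μ.map T) t = charFun μ (T.adjoint t) := by
  have hT : Measurable T := T.continuous_of_finiteDimensional.measurable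
  rw [charFun_apply, charFun_apply, integral_map hT.aemeasurable (by fun_prop)]
  simp only [LinearMap.adjoint_inner_right]

section MultivariateGaussian

variable {m n : Type*} [Fintype m] [DecidableEq m] [Fintype n] [DecidableEq n]

theorem multivariateGaussian_zero_right (a : EuclideanSpace ℝ n) :
    multivariateGaussian a 0 = Measure.dirac a := by
  simp [multivariateGaussian]

theorem multivariateGaussian_conv (a b : EuclideanSpace ℝ n) {S T : Matrix n n ℝ}
    (hS : S.PosSemidef) (hT : T.PosSemidef) :
    multivariateGaussian a S ∗ multivariateGaussian b T =
      multivariateGaussian (a + b) (S + T) := by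
  refine Measure.ext_of_charFun (funext fun t ↦ ?_)
  rw [charFun_conv, charFun_multivariateGaussian hS, charFun_multivariateGaussian hT,
    charFun_multivariateGaussian (hS.add hT), ← Complex.exp_add, inner_add_right, add_mulVec,
    dotProduct_add]
  push_cast
  ring_nf

theorem map_toEuclideanLin_multivariateGaussian (a : EuclideanSpace ℝ n) {S : Matrix n n ℝ}
    (hS : S.PosSemidef) (A : Matrix m n ℝ) :
    (multivariateGaussian a S).map A.toEuclideanLin =
      multivariateGaussian (A.toEuclideanLin a) (A * S * Aᵀ) := by
  have hASA : (A * S * Aᵀ).PosSemidef := hS.mul_mul_conjTranspose_same A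
  refine Measure.ext_of_charFun (funext fun t ↦ ?_)
  have hcov : ofLp (Aᵀ.toEuclideanLin t) ⬝ᵥ S *ᵥ ofLp (Aᵀ.toEuclideanLin t) =
      ofLp t ⬝ᵥ (A * S * Aᵀ) *ᵥ ofLp t := by
    simp only [toLpLin_apply, ← mulVec_mulVec, dotProduct_mulVec, mulVec_transpose,
      vecMul_vecMul]
  rw [charFun_map_linearMap, charFun_multivariateGaussian hS, charFun_multivariateGaussian hASA,
    LinearMap.adjoint_inner_left, ← toEuclideanLin_conjTranspose_eq_adjoint,
    conjTranspose_eq_transpose_of_trivial, hcov]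

theorem integral_multivariateGaussian_mono {a : EuclideanSpace ℝ n} {S T : Matrix n n ℝ}
    (hS : 0 ≤ S) (hST : S ≤ T) {f : EuclideanSpace ℝ n → ℝ} (hf : ConvexOn ℝ univ f)
    (hfS : Integrable f (multivariateGaussian a S))
    (hfT : Integrable f (multivariateGaussian a T)) :
    ∫ x, f x ∂multivariateGaussian a S ≤ ∫ x, f x ∂multivariateGaussian a T := by
  have hconv : multivariateGaussian a S ∗ multivariateGaussian 0 (T - S) =
      multivariateGaussian a T := by
    rw [multivariateGaussian_conv a 0 hS.posSemidef (sub_nonneg.mpr hST).posSemidef, add_zero,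
      add_sub_cancel]
  rw [← hconv] at hfT ⊢
  exact integral_le_integral_conv_of_convexOn hf hf.locallyLipschitz.continuous
    IsGaussian.integrable_id integral_id_multivariateGaussian hfS hfT

end MultivariateGaussian

section SupportFun

variable {E F : Type*} [NormedAddCommGroup E] [InnerProductSpace ℝ E] [NormedAddCommGroup F]
  [InnerProductSpace ℝ F]

/-- The support function `x ↦ sup_{u ∈ K} ⟪x, u⟫` of a set `K`, whose Gaussian average is the mean
width of `K`. It takes the junk value `0` where the supremum is over an empty or unbounded set. -/
noncomputable def supportFun (K : Set E) (x : E) : ℝ :=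
  sSup ((fun u ↦ ⟪x, u⟫) '' K)

theorem supportFun_zero (K : Set E) : supportFun K 0 = 0 := by
  refine le_antisymm (Real.sSup_nonpos ?_) (Real.sSup_nonneg ?_) <;> simp

theorem supportFun_image [FiniteDimensional ℝ E] [FiniteDimensional ℝ F] (T : E →ₗ[ℝ] F)
    (K : Set E) (y : F) : supportFun (T '' K) y = supportFun K (T.adjoint y) := by
  simp only [supportFun, image_image, LinearMap.adjoint_inner_left]

variable {K : Set E} {x : E}

theorem supportFun_le {r : ℝ} (hne : K.Nonempty) (h : ∀ u ∈ K, ⟪x, u⟫ ≤ r) :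
    supportFun K x ≤ r :=
  csSup_le (hne.image _) (forall_mem_image.mpr h)

theorem inner_le_supportFun (hbdd : Bornology.IsBounded K) {u : E} (hu : u ∈ K) :
    ⟪x, u⟫ ≤ supportFun K x :=
  le_csSup ((innerSL ℝ x).lipschitz.isBounded_image hbdd).bddAbove (mem_image_of_mem _ hu)

theorem convexOn_supportFun (hne : K.Nonempty) (hbdd : Bornology.IsBounded K) :
    ConvexOn ℝ univ (supportFun K) := by
  refine ⟨convex_univ, fun x _ y _ a b ha hb _ ↦ supportFun_le hne fun u hu ↦ ?_⟩
  rw [inner_add_left, real_inner_smul_left, real_inner_smul_left]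
  exact add_le_add (mul_le_mul_of_nonneg_left (inner_le_supportFun hbdd hu) ha)
    (mul_le_mul_of_nonneg_left (inner_le_supportFun hbdd hu) hb)

theorem exists_lipschitzWith_supportFun (hne : K.Nonempty) (hbdd : Bornology.IsBounded K) :
    ∃ C, LipschitzWith C (supportFun K) := by
  obtain ⟨C, hC, hKC⟩ := hbdd.exists_pos_norm_le
  refine ⟨⟨C, hC.le⟩, .of_le_add_mul _ fun x y ↦ supportFun_le hne fun u hu ↦ ?_⟩
  calc ⟪x, u⟫ = ⟪y, u⟫ + ⟪x - y, u⟫ := by rw [inner_sub_left, add_sub_cancel]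
    _ ≤ supportFun K y + ‖x - y‖ * ‖u‖ :=
      add_le_add (inner_le_supportFun hbdd hu) (real_inner_le_norm _ _)
    _ ≤ supportFun K y + C * dist x y := by
      rw [mul_comm, dist_eq_norm]
      gcongr
      exact hKC u hu

theorem integrable_supportFun [MeasurableSpace E] {μ : Measure E} (hne : K.Nonempty)
    (hbdd : Bornology.IsBounded K) (hμ : Integrable id μ) : Integrable (supportFun K) μ := by
  obtain ⟨C, hC⟩ := exists_lipschitzWith_supportFun hne hbdd
  exact memLp_one_iff_integrable.mp
    (hC.comp_memLp (supportFun_zero K) (memLp_one_iff_integrable.mpr hμ))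

theorem integral_supportFun_multivariateGaussian_mono {n : Type*} [Fintype n] [DecidableEq n]
    {K : Set (EuclideanSpace ℝ n)} (hne : K.Nonempty) (hbdd : Bornology.IsBounded K)
    {a : EuclideanSpace ℝ n} {S T : Matrix n n ℝ} (hS : 0 ≤ S) (hST : S ≤ T) :
    ∫ x, supportFun K x ∂multivariateGaussian a S ≤
      ∫ x, supportFun K x ∂multivariateGaussian a T :=
  integral_multivariateGaussian_mono hS hST (convexOn_supportFun hne hbdd)
    (integrable_supportFun hne hbdd IsGaussian.integrable_id)
    (integrable_supportFun hne hbdd IsGaussian.integrable_id)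

end SupportFun

section MeanWidth

theorem isBounded_image_toLp {ι : Type*} [Finite ι] {S : Set (ι → ℝ)}
    (hbdd : Bornology.IsBounded S) : Bornology.IsBounded (toLp 2 '' S) := by
  have := Fintype.ofFinite ι
  exact (PiLp.continuousLinearEquiv 2 ℝ fun _ : ι ↦ ℝ).symm.lipschitz.isBounded_image hbdd

variable {d n : ℕ}

theorem gaussianMeanWidth_eq_integral_supportFun (S : Set (Fin d → ℝ)) :
    gaussianMeanWidth S = ∫ x, supportFun (toLp 2 '' S) x ∂multivariateGaussian 0 1 := by
  have hinner (g u : Fin d → ℝ) : ⟪toLp 2 g, toLp 2 u⟫ = ∑ i, g i * u i := by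
    simp [EuclideanSpace.inner_toLp_toLp, dotProduct, mul_comm]
  rw [multivariateGaussian_zero_one, ← map_pi_eq_stdGaussian, ← MeasurableEquiv.coe_toLp,
    integral_map_equiv]
  simp only [gaussianMeanWidth, supportFun, image_image, MeasurableEquiv.coe_toLp, hinner]

theorem gaussianMeanWidth_image_mulVec {S : Set (Fin n → ℝ)} (hne : S.Nonempty)
    (hbdd : Bornology.IsBounded S) (A : Matrix (Fin d) (Fin n) ℝ) :
    gaussianMeanWidth (A.mulVec '' S) =
      ∫ x, supportFun (toLp 2 '' S) x ∂multivariateGaussian 0 (Aᵀ * A) := by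
  have hcont : Continuous (supportFun (toLp 2 '' S)) :=
    (convexOn_supportFun (hne.image _) (isBounded_image_toLp hbdd)).locallyLipschitz.continuous
  have himage : toLp 2 '' (A.mulVec '' S) = A.toEuclideanLin '' (toLp 2 '' S) := by
    simp only [image_image, toLpLin_toLp, toLin'_apply]
  have hlaw : (multivariateGaussian 0 1).map Aᵀ.toEuclideanLin =
      multivariateGaussian 0 (Aᵀ * A) := by
    simpa using map_toEuclideanLin_multivariateGaussian 0 .one Aᵀ
  rw [gaussianMeanWidth_eq_integral_supportFun, himage, ← hlaw,
    integral_map (by fun_prop) hcont.aestronglyMeasurable]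
  simp only [supportFun_image, ← toEuclideanLin_conjTranspose_eq_adjoint,
    conjTranspose_eq_transpose_of_trivial]

theorem gaussianMeanWidth_nonneg {S : Set (Fin d → ℝ)} (hne : S.Nonempty)
    (hbdd : Bornology.IsBounded S) : 0 ≤ gaussianMeanWidth S :=
  calc 0 = ∫ x, supportFun (toLp 2 '' S) x ∂multivariateGaussian 0 0 := by
        rw [multivariateGaussian_zero_right, integral_dirac, supportFun_zero]
    _ ≤ ∫ x, supportFun (toLp 2 '' S) x ∂multivariateGaussian 0 1 :=
        integral_supportFun_multivariateGaussian_mono (hne.image _) (isBounded_image_toLp hbdd)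
          le_rfl PosSemidef.one.nonneg
    _ = gaussianMeanWidth S := (gaussianMeanWidth_eq_integral_supportFun S).symm

end MeanWidth

theorem conjTranspose_mul_self_le_one {𝕜 m n : Type*} [RCLike 𝕜] [Fintype m] [DecidableEq m]
    [Fintype n] [DecidableEq n] {P : Matrix m n 𝕜} (hP : P * Pᴴ = 1) : Pᴴ * P ≤ 1 := by
  have hproj : IsStarProjection (Pᴴ * P) :=
    { isIdempotentElem := by
        rw [IsIdempotentElem, Matrix.mul_assoc, ← Matrix.mul_assoc P, hP, Matrix.one_mul]
      isSelfAdjoint := isHermitian_conjTranspose_mul_self P }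
  exact hproj.le_one

theorem gmw_projection_le_general {n L : ℕ} (K' : Set (Fin n → ℝ)) (hne : K'.Nonempty)
    (hbdd : Bornology.IsBounded K') (P : Matrix (Fin L) (Fin n) ℝ) (hP : Pᵀ * P ≤ 1) :
    gaussianMeanWidth ((fun u => P.mulVec u) '' K') ≤ gaussianMeanWidth K' := by
  rw [gaussianMeanWidth_image_mulVec hne hbdd, gaussianMeanWidth_eq_integral_supportFun]
  exact integral_supportFun_multivariateGaussian_mono (hne.image _) (isBounded_image_toLp hbdd)
    (posSemidef_conjTranspose_mul_self P).nonneg hP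

theorem gmw_projection_le {n L : ℕ} (K' : Set (Fin n → ℝ)) (hne : K'.Nonempty)
    (hbdd : Bornology.IsBounded K') (P : Matrix (Fin L) (Fin n) ℝ)
    (hP : P * P.transpose = 1) :
    gaussianMeanWidth ((fun u => P.mulVec u) '' K') ≤ 2 * gaussianMeanWidth K' := by
  have hle := gmw_projection_le_general K' hne hbdd P (conjTranspose_mul_self_le_one hP)
  linarith [gaussianMeanWidth_nonneg hne hbdd]
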